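/- arXiv:1011.3491 — 4 statements merged into one kernel-verified Lean document; each statement's English description precedes it below -/
import Mathlib

section
/- Let P, x, y, z be lists over a linearly ordered type. If P is a prefix of x, P is a prefix of z, x ≤lex y, and y ≤lex z, then P is a prefix of y. (Strings lexicographically between two strings sharing a common prefix P also have prefix P.) -/
/-- Strings lexicographically between two strings sharing a common prefix `P`
also have prefix `P`. -/
theorem prefix_of_lex_between {α : Type*} [LinearOrder α] (P x y z : List α)
    (hPx : P <+: x) (hPz : P <+: z)
    (hxy : List.Lex (· < ·) x y ∨ x = y)
    (hyz : List.Lex (· < ·) y z ∨ y = z) :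
    P <+: y := by
  rcases hxy with hxy | rfl
  swap
  · exact hPx
  rcases hyz with hyz | rfl
  swap
  · exact hPz
  induction P generalizing x y z with
  | nil => exact List.nil_prefix
  | cons a P ih =>
    obtain ⟨s, rfl⟩ := hPx
    obtain ⟨t, rfl⟩ := hPz
    rw [List.cons_append] at hxy hyz
    cases hxy with
    | cons h1 =>
      cases hyz with
      | cons h2 =>
        exact (List.prefix_cons_inj a).2
          (ih _ _ _ (List.prefix_append P s) (List.prefix_append P t) h1 h2)
      | rel h2 => exact absurd h2 (lt_irrefl _)
    | rel h1 =>
      cases hyz with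
      | cons h2 => exact absurd h1 (lt_irrefl _)
      | rel h2 => exact absurd h1 (lt_asymm h2)
end

section
/- Let σ be a suffix array of a list T and let P be any list (pattern). Then the rank set of P is an interval of ranks: for all i ≤ j ≤ k in Fin |T|, if P is a prefix of T.drop (σ i) and P is a prefix of T.drop (σ k), then P is a prefix of T.drop (σ j). (Every pattern corresponds to a contiguous interval of the suffix array / BWT.) -/
theorem prefix_of_lex_between_s2 {α : Type*} [LinearOrder α] (P : List α) :
    ∀ a y c : List α, List.Lex (· < ·) (P ++ a) y → List.Lex (· < ·) y (P ++ c) →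
      P <+: y := by
  induction P with
  | nil => intro a y c _ _; exact List.nil_prefix
  | cons p P ih =>
    intro a y c h1 h2
    rw [List.cons_append] at h1 h2
    cases h1 with
    | cons h1 =>
      cases h2 with
      | cons h2 => exact (List.prefix_cons_inj p).2 (ih _ _ _ h1 h2)
      | rel h => exact absurd h (lt_irrefl _)
    | rel h =>
      cases h2 with
      | cons h2 => exact absurd h (lt_irrefl _)
      | rel h' => exact absurd h (lt_asymm h')


/-- The rank set of a pattern `P` in a suffix array is an interval of ranks:
every pattern corresponds to a contiguous interval of the suffix array. -/
theorem rank_set_is_interval {α : Type*} [LinearOrder α] (T : List α)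
    (σ : Fin T.length → Fin T.length) (hbij : Function.Bijective σ)
    (hmono : ∀ i j : Fin T.length, i < j →
      List.Lex (· < ·) (T.drop (σ i)) (T.drop (σ j)))
    (P : List α) :
    ∀ i j k : Fin T.length, i ≤ j → j ≤ k →
      P <+: T.drop (σ i) → P <+: T.drop (σ k) → P <+: T.drop (σ j) := by
  intro i j k hij hjk hi hk
  rcases hij.eq_or_lt with rfl | hij
  · exact hi
  rcases hjk.eq_or_lt with rfl | hjk
  · exact hk
  have h1 := hmono i j hij
  have h2 := hmono j k hjk
  obtain ⟨a, ha⟩ := hi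
  obtain ⟨c, hc⟩ := hk
  rw [← ha] at h1
  rw [← hc] at h2
  exact prefix_of_lex_between_s2 P a _ c h1 h2
end

section
/- Let T be a list over a linearly ordered type and P1, P2 lists. Suppose P1 is a prefix of T.drop j and T.drop (j + |P1|) <lex P2. Then T.drop j <lex P1 ++ P2, and moreover T.drop j <lex T.drop k for every position k such that P1 ++ P2 is a prefix of T.drop k. (The 'left arrow' case: a suffix starting with P1 whose displaced continuation is lexicographically below P2 lies strictly before every suffix starting with P1P2.) -/
theorem lex_append_right_aux {α : Type*} [LinearOrder α] {a b : List α} (c : List α)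
    (h : List.Lex (· < ·) a b) : List.Lex (· < ·) a (b ++ c) := by
  induction h with
  | nil => exact List.Lex.nil
  | cons _ ih => exact List.Lex.cons ih
  | rel h => exact List.Lex.rel h

theorem lex_append_left_aux {α : Type*} [LinearOrder α] {a b : List α} (c : List α)
    (h : List.Lex (· < ·) a b) : List.Lex (· < ·) (c ++ a) (c ++ b) := by
  induction c with
  | nil => exact h
  | cons _ _ ih => exact List.Lex.cons ih

/-- The "left arrow" case: a suffix starting with `P1` whose displaced
continuation is lexicographically below `P2` lies strictly before every suffix
starting with `P1 ++ P2`. -/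
theorem left_arrow_case {α : Type*} [LinearOrder α] (T P1 P2 : List α) (j : ℕ)
    (hpre : P1 <+: T.drop j)
    (hlt : List.Lex (· < ·) (T.drop (j + P1.length)) P2) :
    List.Lex (· < ·) (T.drop j) (P1 ++ P2) ∧
      ∀ k : ℕ, P1 ++ P2 <+: T.drop k →
        List.Lex (· < ·) (T.drop j) (T.drop k) := by
  have h : List.Lex (· < ·) (T.drop j) (P1 ++ P2) := by
    obtain ⟨s, hs⟩ := hpre
    rw [← List.drop_drop, ← hs, List.drop_left] at hlt
    rw [← hs]
    exact lex_append_left_aux P1 hlt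
  refine ⟨h, fun k hk => ?_⟩
  obtain ⟨s, hs⟩ := hk
  rw [← hs]
  exact lex_append_right_aux s h
end

section
/- Let P 0, …, P (t-1) be nonempty lists over a type α and let S = P 0 ++ ⋯ ++ P (t-1). If S has an LZ parse consisting of z phrases, then S has an LZ parse consisting of at most z + t phrases in which every pattern boundary is a phrase boundary: for each k ≤ t, the prefix P 0 ++ ⋯ ++ P (k-1) of S equals the concatenation of some initial segment of the phrase list. (Parsing the patterns P 0, …, P (t-1) one by one, while allowing matches to cross the boundaries of previously seen patterns, produces at most t more phrases than parsing their concatenation as a single string.) -/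
/-- A phrase `f` is LZ-valid relative to an already-parsed prefix `Q` if it is
a single character or a factor (contiguous substring) of `Q`. -/
def LZValid {α : Type*} (f Q : List α) : Prop :=
  f.length = 1 ∨ f <:+: Q

/-- An LZ parse of `S` is a list of nonempty phrases whose concatenation is `S`
and in which every phrase is LZ-valid relative to the concatenation of the
phrases preceding it. -/
def IsLZParse {α : Type*} (phrases : List (List α)) (S : List α) : Prop :=
  phrases.flatten = S ∧
    ∀ pre ph suf, phrases = pre ++ ph :: suf →
      ph ≠ [] ∧ LZValid ph pre.flatten

/-- Recursive form of phrase validity, relative to a prefix. -/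
def LZOk {α : Type*} : List α → List (List α) → Prop
  | _, [] => True
  | Q, f :: fs => (f ≠ [] ∧ LZValid f Q) ∧ LZOk (Q ++ f) fs

theorem lzOk_iff {α : Type*} (ps : List (List α)) : ∀ Q : List α,
    LZOk Q ps ↔ ∀ pre ph suf, ps = pre ++ ph :: suf →
      ph ≠ [] ∧ LZValid ph (Q ++ pre.flatten) := by
  induction ps with
  | nil => intro Q; simp [LZOk]
  | cons f fs ih =>
    intro Q
    simp only [LZOk, ih]
    constructor
    · rintro ⟨h1, h2⟩ pre ph suf h
      cases pre with
      | nil =>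
        simp only [List.nil_append, List.cons.injEq] at h
        obtain ⟨rfl, rfl⟩ := h
        simpa using h1
      | cons g gs =>
        simp only [List.cons_append, List.cons.injEq] at h
        obtain ⟨rfl, h⟩ := h
        simpa using h2 gs ph suf h
    · intro h
      refine ⟨by simpa using h [] f fs rfl, fun pre ph suf e => ?_⟩
      simpa using h (f :: pre) ph suf (by simp [e])

theorem lzOk_append {α : Type*} (as bs : List (List α)) : ∀ Q : List α,
    LZOk Q (as ++ bs) ↔ LZOk Q as ∧ LZOk (Q ++ as.flatten) bs := by
  induction as with
  | nil => intro Q; simp [LZOk]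
  | cons f fs ih => intro Q; simp [LZOk, ih, and_assoc]

theorem isLZParse_iff {α : Type*} (ps : List (List α)) (S : List α) :
    IsLZParse ps S ↔ ps.flatten = S ∧ LZOk [] ps := by
  rw [lzOk_iff]; simp [IsLZParse]

/-- `Q` is the concatenation of an initial segment of `ps`. -/
def LZBdry {α : Type*} (ps : List (List α)) (Q : List α) : Prop :=
  ∃ a b, ps = a ++ b ∧ a.flatten = Q

/-- A single refinement step: insert one boundary with at most one more phrase. -/
theorem lz_refine {α : Type*} (ps : List (List α)) (S Q R : List α)
    (h : IsLZParse ps S) (hQ : S = Q ++ R) :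
    ∃ ps', IsLZParse ps' S ∧ ps'.length ≤ ps.length + 1 ∧ LZBdry ps' Q ∧
      ∀ T, LZBdry ps T → LZBdry ps' T := by
  have hf : ps.flatten = Q ++ R := h.1.trans hQ
  rcases List.flatten_eq_append_iff.1 hf with ⟨as, bs, h1, h2, h3⟩ | ⟨as, bs, c, cs, ds, h1, h2, h3⟩
  · exact ⟨ps, h, by omega, ⟨as, bs, h1, h2.symm⟩, fun T hT => hT⟩
  · by_cases hb : bs = []
    · subst hb
      exact ⟨ps, h, by omega, ⟨as, _, h1, by simpa using h2.symm⟩, fun T hT => hT⟩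
    · have hok := ((isLZParse_iff _ _).1 h).2
      rw [h1, lzOk_append] at hok
      simp only [LZOk, List.nil_append] at hok
      obtain ⟨ha, ⟨-, hv⟩, hd⟩ := hok
      have hinf : (bs ++ c :: cs) <:+: as.flatten := by
        rcases hv with hv | hv
        · have := List.length_pos_iff.2 hb
          simp at hv
          omega
        · exact hv
      refine ⟨as ++ bs :: (c :: cs) :: ds, ?_, ?_, ?_, ?_⟩
      · rw [isLZParse_iff, lzOk_append]
        refine ⟨by rw [hQ, h2, h3]; simp, ha, ?_⟩
        simp only [LZOk, List.nil_append]
        refine ⟨⟨hb, Or.inr ?_⟩, ⟨by simp, Or.inr ?_⟩, by simpa using hd⟩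
        · exact (List.prefix_append _ _).isInfix.trans hinf
        · exact ((List.suffix_append _ _).isInfix.trans hinf).trans
            (List.prefix_append _ _).isInfix
      · simp [h1]; omega
      · exact ⟨as ++ [bs], (c :: cs) :: ds, by simp, by simp [h2]⟩
      · rintro T ⟨a, b, hab, rfl⟩
        rw [h1] at hab
        rcases List.append_eq_append_iff.1 hab with ⟨u, rfl, hu⟩ | ⟨u, rfl, hu⟩
        · cases u with
          | nil => exact ⟨as, _, rfl, by simp⟩
          | cons x u =>
            simp only [List.cons_append, List.cons.injEq] at hu
            obtain ⟨rfl, rfl⟩ := hu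
            exact ⟨as ++ bs :: (c :: cs) :: u, b, by simp, by simp⟩
        · exact ⟨a, u ++ bs :: (c :: cs) :: ds, by simp, rfl⟩

/-- Parsing the patterns `P 0, …, P (t-1)` one by one, while allowing matches
to cross the boundaries of previously seen patterns, produces at most `t` more
phrases than parsing their concatenation as a single string: from an LZ parse
of the concatenation `S` with `z` phrases we get an LZ parse of `S` with at
most `z + t` phrases in which every pattern boundary is a phrase boundary. -/
theorem lz_parse_respecting_boundaries {α : Type*} (t : ℕ) (P : Fin t → List α)
    (hP : ∀ h : Fin t, P h ≠ []) (S : List α) (hS : S = (List.ofFn P).flatten)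
    (z : ℕ) (parse : List (List α)) (hparse : IsLZParse parse S)
    (hz : parse.length = z) :
    ∃ parse' : List (List α), IsLZParse parse' S ∧ parse'.length ≤ z + t ∧
      ∀ k ≤ t, ∃ i ≤ parse'.length,
        (parse'.take i).flatten = ((List.ofFn P).take k).flatten := by 
  have key : ∀ k : ℕ, ∃ ps, IsLZParse ps S ∧ ps.length ≤ z + k ∧
      ∀ j ≤ k, LZBdry ps ((List.ofFn P).take j).flatten := by
    intro k
    induction k with
    | zero =>
      refine ⟨parse, hparse, by omega, fun j hj => ⟨[], parse, rfl, ?_⟩⟩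
      obtain rfl : j = 0 := by omega
      simp
    | succ k ih =>
      obtain ⟨ps, h1, h2, h3⟩ := ih
      obtain ⟨ps', g1, g2, g3, g4⟩ := lz_refine ps S ((List.ofFn P).take (k + 1)).flatten
        ((List.ofFn P).drop (k + 1)).flatten h1
        (by rw [hS, ← List.flatten_append, List.take_append_drop])
      refine ⟨ps', g1, by omega, fun j hj => ?_⟩
      rcases Nat.lt_or_ge k j with hk | hk
      · obtain rfl : j = k + 1 := by omega
        exact g3
      · exact g4 _ (h3 j hk)
  obtain ⟨ps, h1, h2, h3⟩ := key t
  refine ⟨ps, h1, h2, fun k hk => ?_⟩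
  obtain ⟨a, b, rfl, hab⟩ := h3 k hk
  exact ⟨a.length, by simp, by simpa using hab⟩
end
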